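/- arXiv:1512.01186 — 3 statements merged into one kernel-verified Lean document; each statement's English description precedes it below -/
import Mathlib

section
/- Functional equation of the Mordell integral: let x, τ be complex numbers with Re(τ) > 0. Then Φ(x, τ) = −(e^{iπ(1/4 − x²/τ)}/√τ)·conj( Φ( −conj(x)/conj(τ) , 1/conj(τ) ) ), where conj denotes complex conjugation and √τ denotes the principal branch of the square root. -/
open scoped Real
open MeasureTheory Set Complex

/-- Integral along the straight line `t ↦ c + e^{iθ} t`, `t ∈ ℝ`. -/
noncomputable def lineInt (c θ : ℝ) (f : ℂ → ℂ) : ℂ :=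
  ∫ t : ℝ, f ((c : ℂ) + Complex.exp ((θ : ℂ) * Complex.I) * (t : ℂ)) *
    Complex.exp ((θ : ℂ) * Complex.I)

/-- The Mordell integral `Φ(x, τ)`, the path being the straight line of slope 1
crossing the real axis at `c ∈ (0, 1)`. -/
noncomputable def mordellPhi (x τ : ℂ) (c : ℝ) : ℂ :=
  lineInt c (π/4) (fun u =>
    Complex.exp ((π : ℂ) * Complex.I * τ * u ^ 2 + 2 * (π : ℂ) * Complex.I * x * u) /
      (Complex.exp (2 * (π : ℂ) * Complex.I * u) - 1))

/-!
Write `K v u = e^{2πiuv} / (e^{2πiu} - 1)`. Since `e^{πiτu² + 2πixu}` is, up to a constant, the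
Fourier transform of `e^{-πi(v - x)²/τ}` along a line of slope `-1`, the Mordell integral is the
double integral of `e^{-πi(v - x)²/τ} K v u` over `u` on a line of slope `1` and `v` on a line
of slope `-1`. Exchanging the two integrations leaves the inner integral of `K v` along the line
of slope `1`. Shifting `u` by `-1` multiplies `K v` by `e^{-2πiv}`, and only the simple pole at
`0` lies between the line and its shift, so the residue theorem evaluates this integral to
`1 / (1 - e^{-2πiv})`. What remains is the complex conjugate of a Mordell integral, because
conjugation exchanges the slopes `1` and `-1`.
-/

open Filter Topology Asymptotics
open scoped Interval

section Rectangle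

variable {E : Type*} [NormedAddCommGroup E] [NormedSpace ℂ E]

/-- The integral of `f` along the boundary of the rectangle with lower left corner `z` and upper
right corner `w`, traversed counterclockwise. It is written as in
`Complex.integral_boundary_rect_eq_zero_of_differentiableOn`. -/
noncomputable def rectIntegral (f : ℂ → E) (z w : ℂ) : E :=
  (∫ x : ℝ in z.re..w.re, f (x + z.im * I)) - (∫ x : ℝ in z.re..w.re, f (x + w.im * I)) +
    I • (∫ y : ℝ in z.im..w.im, f (w.re + y * I)) - I • ∫ y : ℝ in z.im..w.im, f (z.re + y * I)

/-- The boundary of the rectangle with opposite corners `z` and `w`. -/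
def rectBoundary (z w : ℂ) : Set ℂ :=
  [[z.re, w.re]] ×ℂ {z.im, w.im} ∪ {z.re, w.re} ×ℂ [[z.im, w.im]]

lemma rectIntegral_congr {f g : ℂ → E} {z w : ℂ} (h : EqOn f g (rectBoundary z w)) :
    rectIntegral f z w = rectIntegral g z w := by
  unfold rectIntegral
  congr 1
  · congr 1
    · congr 1 <;> refine intervalIntegral.integral_congr fun x hx ↦ h (.inl ?_) <;>
        simpa [mem_reProdIm] using hx
    · congr 1
      exact intervalIntegral.integral_congr fun y hy ↦ h (.inr (by simpa [mem_reProdIm] using hy))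
  · congr 1
    exact intervalIntegral.integral_congr fun y hy ↦ h (.inr (by simpa [mem_reProdIm] using hy))

lemma rectIntegral_add {f g : ℂ → E} {z w : ℂ} (hf : ContinuousOn f (rectBoundary z w))
    (hg : ContinuousOn g (rectBoundary z w)) :
    rectIntegral (fun u ↦ f u + g u) z w = rectIntegral f z w + rectIntegral g z w := by
  have hor {F : ℂ → E} (hF : ContinuousOn F (rectBoundary z w)) {y : ℝ}
      (hy : y ∈ ({z.im, w.im} : Set ℝ)) :
      IntervalIntegrable (fun x : ℝ ↦ F (x + y * I)) volume z.re w.re :=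
    (hF.comp (by fun_prop) fun x hx ↦
      .inl (by simpa [mem_reProdIm] using ⟨hx, hy⟩)).intervalIntegrable
  have ver {F : ℂ → E} (hF : ContinuousOn F (rectBoundary z w)) {x : ℝ}
      (hx : x ∈ ({z.re, w.re} : Set ℝ)) :
      IntervalIntegrable (fun y : ℝ ↦ F (x + y * I)) volume z.im w.im :=
    (hF.comp (by fun_prop) fun y hy ↦
      .inr (by simpa [mem_reProdIm] using ⟨hx, hy⟩)).intervalIntegrable
  unfold rectIntegral
  rw [intervalIntegral.integral_add (hor hf (by simp)) (hor hg (by simp)),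
    intervalIntegral.integral_add (hor hf (by simp)) (hor hg (by simp)),
    intervalIntegral.integral_add (ver hf (by simp)) (ver hg (by simp)),
    intervalIntegral.integral_add (ver hf (by simp)) (ver hg (by simp)), smul_add, smul_add]
  abel

lemma rectIntegral_smul_const [CompleteSpace E] (f : ℂ → ℂ) (v : E) (z w : ℂ) :
    rectIntegral (fun u ↦ f u • v) z w = rectIntegral f z w • v := by
  simp only [rectIntegral, intervalIntegral.integral_smul_const, sub_smul, add_smul, smul_assoc]

lemma mul_integral_inv_eq_log_sub_log {γ : ℝ → ℂ} {e η : ℂ} {s t : ℝ}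
    (hγ : ∀ x ∈ [[s, t]], HasDerivAt γ e x) (h : ∀ x ∈ [[s, t]], η * γ x ∈ slitPlane) :
    e * ∫ x in s..t, (γ x)⁻¹ = log (η * γ t) - log (η * γ s) := by
  have hne : ∀ x ∈ [[s, t]], η ≠ 0 ∧ γ x ≠ 0 := fun x hx ↦
    mul_ne_zero_iff.mp (slitPlane_ne_zero (h x hx))
  have hcont : ContinuousOn γ [[s, t]] := fun x hx ↦ (hγ x hx).continuousAt.continuousWithinAt
  rw [← intervalIntegral.integral_const_mul]
  refine intervalIntegral.integral_eq_sub_of_hasDerivAt (f := fun x ↦ log (η * γ x))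
    (fun x hx ↦ ?_)
    (continuousOn_const.mul (hcont.inv₀ fun x hx ↦ (hne x hx).2)).intervalIntegrable
  refine (((hγ x hx).const_mul η).clog_real (h x hx)).congr_deriv ?_
  rw [mul_div_mul_left _ _ (hne x hx).1, div_eq_mul_inv]

lemma log_I_mul_sub_log {u : ℂ} (hre : 0 < u.re) (him : u.im < 0) :
    log (I * u) - log u = π / 2 * I := by
  have harg : I.arg + u.arg ∈ Ioc (-π) π := by
    rw [arg_I]
    have := neg_pi_div_two_lt_arg_iff.mpr (.inl hre)
    have := arg_neg_iff.mpr him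
    constructor <;> linarith [Real.pi_pos]
  rw [log_mul I_ne_zero (by rintro rfl; simp at hre) harg, log_I]
  ring

/-- Each side of the rectangle, rotated by a power of `I` into the right half plane, contributes a
difference of principal logarithms; at each of the four corners the two branches differ by
`π / 2 * I`. -/
lemma rectIntegral_sub_inv {z w p : ℂ} (hre : p.re ∈ Ioo z.re w.re) (him : p.im ∈ Ioo z.im w.im) :
    rectIntegral (fun u ↦ (u - p)⁻¹) z w = 2 * π * I := by
  obtain ⟨hzp, hpw⟩ := hre
  obtain ⟨hzp', hpw'⟩ := him
  let u (x y : ℝ) : ℂ := x + y * I - p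
  have hu_re (x y : ℝ) : (u x y).re = x - p.re := by simp [u]
  have hu_im (x y : ℝ) : (u x y).im = y - p.im := by simp [u]
  have horizontal (y : ℝ) {η : ℂ} (h : ∀ x, 0 < (η * u x y).re) :
      ∫ x in z.re..w.re, (u x y)⁻¹ = log (η * u w.re y) - log (η * u z.re y) := by
    have hu (x : ℝ) : HasDerivAt (fun x : ℝ ↦ u x y) 1 x :=
      (ofRealCLM.hasDerivAt.add_const _).sub_const p
    simpa using mul_integral_inv_eq_log_sub_log (fun x _ ↦ hu x) fun x _ ↦ .inl (h x)
  have vertical (x : ℝ) {η : ℂ} (h : ∀ y, 0 < (η * u x y).re) :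
      I * ∫ y in z.im..w.im, (u x y)⁻¹ = log (η * u x w.im) - log (η * u x z.im) := by
    have hu (y : ℝ) : HasDerivAt (fun y : ℝ ↦ u x y) I y := by
      simpa [u] using ((ofRealCLM.hasDerivAt.mul_const I).const_add (x : ℂ)).sub_const p
    exact mul_integral_inv_eq_log_sub_log (fun y _ ↦ hu y) fun y _ ↦ .inl (h y)
  have bottom := horizontal z.im (η := I) (by simpa [hu_im])
  have right := vertical w.re (η := 1) (by simpa [hu_re])
  have top := horizontal w.im (η := -I) (by simpa [hu_im])
  have left := vertical z.re (η := -1) (by simpa [hu_re])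
  have bottom_right := log_I_mul_sub_log (u := 1 * u w.re z.im) (by simpa [hu_re])
    (by simpa [hu_im])
  have top_right := log_I_mul_sub_log (u := -I * u w.re w.im) (by simpa [hu_im])
    (by simpa [hu_re])
  have top_left := log_I_mul_sub_log (u := -1 * u z.re w.im) (by simpa [hu_re])
    (by simpa [hu_im])
  have bottom_left := log_I_mul_sub_log (u := I * u z.re z.im) (by simpa [hu_im])
    (by simpa [hu_re])
  simp only [← mul_assoc, mul_neg, I_mul_I, neg_neg, mul_one]
    at bottom_right top_right top_left bottom_left
  simp only [rectIntegral, smul_eq_mul]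
  linear_combination bottom + right - top - left + bottom_right + top_right + top_left + bottom_left

lemma rectBoundary_subset_sdiff_singleton {z w p : ℂ} (hre : p.re ∈ Ioo z.re w.re)
    (him : p.im ∈ Ioo z.im w.im) :
    rectBoundary z w ⊆ ([[z.re, w.re]] ×ℂ [[z.im, w.im]]) \ {p} := by
  rintro u hu
  refine ⟨?_, ?_⟩
  · rcases hu with ⟨hx, hy | hy⟩ | ⟨hx | hx, hy⟩ <;> constructor <;> simp_all
  · rintro rfl
    rcases hu with ⟨_, hy | hy⟩ | ⟨hx | hx, _⟩ <;> simp_all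

lemma uIcc_reProdIm_uIcc_mem_nhds {z w p : ℂ} (hre : p.re ∈ Ioo z.re w.re)
    (him : p.im ∈ Ioo z.im w.im) : [[z.re, w.re]] ×ℂ [[z.im, w.im]] ∈ 𝓝 p := by
  rw [uIcc_of_lt (hre.1.trans hre.2), uIcc_of_lt (him.1.trans him.2)]
  exact inter_mem (continuous_re.continuousAt (Icc_mem_nhds hre.1 hre.2))
    (continuous_im.continuousAt (Icc_mem_nhds him.1 him.2))

lemma differentiableOn_update_of_tendsto_smul [CompleteSpace E] {f : ℂ → E} {S : Set ℂ} {p : ℂ}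
    {ρ : E} (hS : S ∈ 𝓝 p) (hf : DifferentiableOn ℂ f (S \ {p}))
    (hρ : Tendsto (fun u ↦ (u - p) • f u) (𝓝[≠] p) (𝓝 ρ)) :
    DifferentiableOn ℂ (Function.update (fun u ↦ (u - p) • f u) p ρ) S := by
  refine (differentiableOn_compl_singleton_and_continuousAt_iff hS).mp
    ⟨?_, continuousAt_update_same.mpr hρ⟩
  refine DifferentiableOn.congr (f := fun u ↦ (u - p) • f u) (by fun_prop) fun u hu ↦ ?_
  exact Function.update_of_ne hu.2 _ _

theorem rectIntegral_eq_of_tendsto_smul [CompleteSpace E] {f : ℂ → E} {z w p : ℂ} {ρ : E}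
    (hre : p.re ∈ Ioo z.re w.re) (him : p.im ∈ Ioo z.im w.im)
    (hf : DifferentiableOn ℂ f ([[z.re, w.re]] ×ℂ [[z.im, w.im]] \ {p}))
    (hρ : Tendsto (fun u ↦ (u - p) • f u) (𝓝[≠] p) (𝓝 ρ)) :
    rectIntegral f z w = (2 * π * I) • ρ := by
  have hS := uIcc_reProdIm_uIcc_mem_nhds hre him
  have hbdry := rectBoundary_subset_sdiff_singleton hre him
  set S := [[z.re, w.re]] ×ℂ [[z.im, w.im]]
  set g := Function.update (fun u ↦ (u - p) • f u) p ρ with hg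
  have hdslope : DifferentiableOn ℂ (dslope g p) S :=
    (differentiableOn_dslope hS).mpr (differentiableOn_update_of_tendsto_smul hS hf hρ)
  have hpole : ContinuousOn (fun u ↦ (u - p)⁻¹ • ρ) (S \ {p}) :=
    (ContinuousOn.inv₀ (by fun_prop) fun u hu ↦ sub_ne_zero.mpr hu.2).smul continuousOn_const
  have hsplit : EqOn f (fun u ↦ dslope g p u + (u - p)⁻¹ • ρ) (S \ {p}) := fun u hu ↦ by
    simp only [dslope_of_ne _ hu.2, slope, vsub_eq_sub, hg, Function.update_self,
      Function.update_of_ne hu.2]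
    rw [smul_sub, inv_smul_smul₀ (sub_ne_zero.mpr hu.2), sub_add_cancel]
  calc rectIntegral f z w
      = rectIntegral (dslope g p) z w + rectIntegral (fun u ↦ (u - p)⁻¹ • ρ) z w := by
        rw [rectIntegral_congr (hsplit.mono hbdry),
          rectIntegral_add (hdslope.continuousOn.mono (hbdry.trans sdiff_subset))
            (hpole.mono hbdry)]
    _ = (2 * π * I) • ρ := by
        rw [rectIntegral_smul_const, rectIntegral_sub_inv hre him, rectIntegral,
          integral_boundary_rect_eq_zero_of_differentiableOn _ _ _ hdslope, zero_add]

end Rectangle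

section Strip

variable {E : Type*} [NormedAddCommGroup E] {a b : ℝ}

/-- The filter of neighbourhoods of the two ends of the closed strip `a ≤ Im z ≤ b`: convergence
along it is convergence as `|Re z| → ∞`, uniform in `Im z`. -/
def stripEnds (a b : ℝ) : Filter ℂ :=
  comap (fun z ↦ |z.re|) atTop ⊓ 𝓟 (im ⁻¹' Icc a b)

lemma eventually_stripEnds {P : ℂ → Prop} :
    (∀ᶠ z in stripEnds a b, P z) ↔ ∀ᶠ r in atTop, ∀ z : ℂ, |z.re| = r → z.im ∈ Icc a b → P z := by
  simp only [stripEnds, eventually_inf_principal, eventually_comap, mem_preimage]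

lemma tendsto_ofReal_add_mul_I_stripEnds {y : ℝ} (hy : y ∈ Icc a b) :
    Tendsto (fun x : ℝ ↦ (x + y * I : ℂ)) (cocompact ℝ) (stripEnds a b) := by
  refine tendsto_inf.mpr ⟨tendsto_comap_iff.mpr ?_, tendsto_principal.mpr (.of_forall ?_)⟩
  · exact tendsto_norm_cocompact_atTop.congr fun x ↦ by simp
  · simpa using hy

lemma integrable_exp_neg_mul_abs {δ : ℝ} (hδ : 0 < δ) :
    Integrable fun x : ℝ ↦ Real.exp (-δ * |x|) := by
  refine (by fun_prop : Continuous fun x : ℝ ↦ Real.exp (-δ * |x|)).locallyIntegrable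
    |>.integrable_of_isBigO_atTop_of_norm_isNegInvariant (g := fun x ↦ Real.exp (-δ * x))
      (.of_forall fun x ↦ by simp) ?_ ⟨Ioi 0, Ioi_mem_atTop 0, exp_neg_integrableOn_Ioi 0 hδ⟩
  refine EventuallyEq.isBigO ?_
  filter_upwards [eventually_ge_atTop 0] with x hx using by rw [abs_of_nonneg hx]

lemma integrable_of_isBigO_stripEnds {f : ℂ → E} {δ y : ℝ} (hδ : 0 < δ) (hy : y ∈ Icc a b)
    (hf : f =O[stripEnds a b] fun z ↦ Real.exp (-δ * |z.re|))
    (hcont : Continuous fun x : ℝ ↦ f (x + y * I)) : Integrable fun x : ℝ ↦ f (x + y * I) := by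
  refine hcont.locallyIntegrable.integrable_of_isBigO_cocompact
    (g := fun x ↦ Real.exp (-δ * |x|)) ?_ ((integrable_exp_neg_mul_abs hδ).integrableAtFilter _)
  simpa [Function.comp_def] using hf.comp_tendsto (tendsto_ofReal_add_mul_I_stripEnds hy)

lemma tendsto_exp_neg_mul_abs_stripEnds {δ : ℝ} (hδ : 0 < δ) :
    Tendsto (fun z : ℂ ↦ Real.exp (-δ * |z.re|)) (stripEnds a b) (𝓝 0) := by
  refine Real.tendsto_exp_atBot.comp
    ((tendsto_comap.mono_left inf_le_left).const_mul_atTop_of_neg (neg_neg_of_pos hδ))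

variable [NormedSpace ℂ E]

lemma tendsto_vertical_integral_of_stripEnds {f : ℂ → E} (hab : a ≤ b)
    (hf : Tendsto f (stripEnds a b) (𝓝 0)) :
    Tendsto (fun x : ℝ ↦ ∫ y in a..b, f (x + y * I)) (cocompact ℝ) (𝓝 0) := by
  rw [Metric.tendsto_nhds]
  intro ε hε
  have hpos : 0 < b - a + 1 := by linarith
  have hsmall := eventually_stripEnds.mp (Metric.tendsto_nhds.mp hf _ (div_pos hε hpos))
  filter_upwards [tendsto_norm_cocompact_atTop.eventually hsmall] with x hx
  rw [dist_zero_right]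
  calc ‖∫ y in a..b, f (x + y * I)‖ ≤ ε / (b - a + 1) * |b - a| := by
        refine intervalIntegral.norm_integral_le_of_norm_le_const fun y hy ↦ ?_
        rw [uIoc_of_le hab] at hy
        simpa using (hx (x + y * I) (by simp) (by simpa using Ioc_subset_Icc_self hy)).le
    _ < ε := by
        rw [abs_of_nonneg (sub_nonneg.mpr hab), div_mul_eq_mul_div, div_lt_iff₀ hpos]
        linarith

theorem integral_sub_integral_eq_of_tendsto_smul [CompleteSpace E] {f : ℂ → E} {p : ℂ} {ρ : E}
    (hp : p.im ∈ Ioo a b) (hf : DifferentiableOn ℂ f (im ⁻¹' Icc a b \ {p}))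
    (hρ : Tendsto (fun z ↦ (z - p) • f z) (𝓝[≠] p) (𝓝 ρ))
    (ha : Integrable fun x : ℝ ↦ f (x + a * I)) (hb : Integrable fun x : ℝ ↦ f (x + b * I))
    (hends : Tendsto f (stripEnds a b) (𝓝 0)) :
    (∫ x : ℝ, f (x + a * I)) - ∫ x : ℝ, f (x + b * I) = (2 * π * I) • ρ := by
  have hab : a ≤ b := (hp.1.trans hp.2).le
  have horizontal {y : ℝ} (hy : Integrable fun x : ℝ ↦ f (x + y * I)) :=
    intervalIntegral_tendsto_integral hy tendsto_neg_atTop_atBot tendsto_id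
  have vertical := tendsto_vertical_integral_of_stripEnds hab hends
  have hlim : Tendsto (fun r : ℝ ↦ rectIntegral f ⟨-r, a⟩ ⟨r, b⟩) atTop
      (𝓝 ((∫ x : ℝ, f (x + a * I)) - (∫ x : ℝ, f (x + b * I)) + I • 0 - I • 0)) :=
    (((horizontal ha).sub (horizontal hb)).add
      ((vertical.mono_left atTop_le_cocompact).const_smul I)).sub
      (((vertical.mono_left atBot_le_cocompact).comp tendsto_neg_atTop_atBot).const_smul I)
  have hconst : ∀ᶠ r : ℝ in atTop, rectIntegral f ⟨-r, a⟩ ⟨r, b⟩ = (2 * π * I) • ρ := by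
    filter_upwards [eventually_gt_atTop |p.re|] with r hr
    refine rectIntegral_eq_of_tendsto_smul (abs_lt.mp hr) hp (hf.mono ?_) hρ
    rw [uIcc_of_le hab]
    exact sdiff_subset_sdiff_left inter_subset_right
  simpa using tendsto_nhds_unique (hlim.congr' hconst) tendsto_const_nhds

end Strip

section Kernel

/-- The parametrization of the line of angle `θ` through `c` used by `lineInt`, extended to complex
parameters. For `0 < sin θ` the strip `0 ≤ Im z ≤ sin θ` is mapped onto the strip between the
parallel lines through `c` and `c - 1`. -/
noncomputable def lineParam (c θ : ℝ) (z : ℂ) : ℂ :=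
  c + exp (θ * I) * z

/-- The zero of `lineParam c θ`, which is the pole of the kernel inside the strip
`0 ≤ Im z ≤ sin θ`. -/
noncomputable def lineZero (c θ : ℝ) : ℂ :=
  -(c * exp (-(θ * I)))

/-- The Fourier kernel `u ↦ e^{2πiuv} / (e^{2πiu} - 1)` of the Mordell integral. -/
noncomputable def mordellKernel (v u : ℂ) : ℂ :=
  exp (2 * π * I * u * v) / (exp (2 * π * I * u) - 1)

variable {c θ : ℝ} {v : ℂ}

lemma lineParam_im (z : ℂ) :
    (lineParam c θ z).im = z.re * Real.sin θ + z.im * Real.cos θ := by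
  rw [lineParam, add_im, ofReal_im, zero_add, mul_im, exp_ofReal_mul_I_re, exp_ofReal_mul_I_im]
  ring

lemma lineParam_add_sin_mul_I (z : ℂ) :
    lineParam c θ (z + Real.sin θ * I) = lineParam c θ (z + Real.cos θ) - 1 := by
  have hexp : exp (θ * I) = Real.cos θ + Real.sin θ * I := by
    rw [exp_mul_I, ofReal_cos, ofReal_sin]
  have hcs : (Real.cos θ : ℂ) ^ 2 + (Real.sin θ : ℂ) ^ 2 = 1 := by
    exact_mod_cast Real.cos_sq_add_sin_sq θ
  simp only [lineParam, hexp]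
  linear_combination -hcs + (Real.sin θ : ℂ) ^ 2 * I_sq

lemma lineParam_eq_mul_sub (z : ℂ) :
    lineParam c θ z = exp (θ * I) * (z - lineZero c θ) := by
  rw [lineParam, lineZero, exp_neg]
  field_simp
  ring

lemma lineParam_lineZero : lineParam c θ (lineZero c θ) = 0 := by
  rw [lineParam_eq_mul_sub, sub_self, mul_zero]

lemma lineParam_ne_zero {z : ℂ} (hz : z ≠ lineZero c θ) : lineParam c θ z ≠ 0 := by
  rw [lineParam_eq_mul_sub]
  exact mul_ne_zero (exp_ne_zero _) (sub_ne_zero.mpr hz)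

lemma im_eq_of_lineParam_eq_ofReal {z : ℂ} {r : ℝ} (h : lineParam c θ z = r) :
    z.im = (c - r) * Real.sin θ := by
  have hz : z = (r - c : ℝ) * exp ((-θ : ℝ) * I) := by
    rw [ofReal_sub, ← h, lineParam, ofReal_neg, neg_mul, exp_neg]
    field_simp
    ring
  rw [hz, im_ofReal_mul, exp_ofReal_mul_I_im, Real.sin_neg]
  ring

lemma lineParam_eq_zero_of_exp_eq_one (hc : c ∈ Ioo 0 1) (hθ : 0 < Real.sin θ) {z : ℂ}
    (hz : z.im ∈ Icc 0 (Real.sin θ)) (hexp : exp (2 * π * I * lineParam c θ z) = 1) :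
    lineParam c θ z = 0 := by
  obtain ⟨n, hn⟩ := exp_eq_one_iff.mp hexp
  rw [mul_comm, mul_left_inj' two_pi_I_ne_zero] at hn
  have him : z.im = (c - n) * Real.sin θ := im_eq_of_lineParam_eq_ofReal (by simpa using hn)
  rw [him] at hz
  have hn0 : (-1 : ℝ) < n := by linarith [hc.1, (mul_le_iff_le_one_left hθ).mp hz.2]
  have hn1 : (n : ℝ) < 1 := by linarith [hc.2, nonneg_of_mul_nonneg_left hz.1 hθ]
  have hn_eq : n = 0 := by
    have : -1 < n := by exact_mod_cast hn0
    have : n < 1 := by exact_mod_cast hn1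
    lia
  rw [hn, hn_eq, Int.cast_zero]

lemma mordellKernel_sub_one (u : ℂ) :
    mordellKernel v (u - 1) = exp (-(2 * π * I * v)) * mordellKernel v u := by
  have hnum : exp (2 * π * I * (u - 1) * v)
      = exp (-(2 * π * I * v)) * exp (2 * π * I * u * v) := by
    rw [← exp_add]
    ring_nf
  have hden : exp (2 * π * I * (u - 1)) = exp (2 * π * I * u) := by
    rw [mul_sub_one, exp_sub, exp_two_pi_mul_I, div_one]
  rw [mordellKernel, mordellKernel, hnum, hden, mul_div_assoc]

lemma differentiableAt_mordellKernel {u : ℂ} (hu : exp (2 * π * I * u) ≠ 1) :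
    DifferentiableAt ℂ (mordellKernel v) u :=
  DifferentiableAt.div (by fun_prop) (by fun_prop) (sub_ne_zero.mpr hu)

lemma tendsto_mul_mordellKernel :
    Tendsto (fun u ↦ u * mordellKernel v u) (𝓝[≠] 0) (𝓝 (2 * π * I)⁻¹) := by
  have hderiv : HasDerivAt (fun u : ℂ ↦ exp (2 * π * I * u)) (2 * π * I) 0 := by
    simpa using ((hasDerivAt_id (0 : ℂ)).const_mul (2 * π * I)).cexp
  have hslope := (hasDerivAt_iff_tendsto_slope_zero.mp hderiv).inv₀ two_pi_I_ne_zero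
  have hnum : Tendsto (fun u : ℂ ↦ exp (2 * π * I * u * v)) (𝓝[≠] 0) (𝓝 1) := by
    have hcont : Continuous fun u : ℂ ↦ exp (2 * π * I * u * v) := by fun_prop
    simpa using (hcont.tendsto 0).mono_left nhdsWithin_le_nhds
  refine ((hnum.mul hslope).congr fun u ↦ ?_).trans (by simp)
  simp only [mordellKernel, zero_add, mul_zero, exp_zero, smul_eq_mul, mul_inv, inv_inv,
    div_eq_mul_inv]
  ring

lemma exp_max_div_two_le_norm_exp_sub_one {w : ℂ} (hw : 1 ≤ |w.re|) :
    Real.exp (max w.re 0) / 2 ≤ ‖exp w - 1‖ := by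
  have hnorm : |Real.exp w.re - 1| ≤ ‖exp w - 1‖ := by
    simpa [norm_exp] using abs_norm_sub_norm_le (exp w) 1
  refine le_trans ?_ hnorm
  rcases le_abs.mp hw with h | h
  · rw [max_eq_left (by linarith)]
    exact le_trans (by linarith [Real.add_one_le_exp w.re]) (le_abs_self _)
  · have hexp : Real.exp w.re ≤ 1 / 2 := by
      rw [← neg_neg w.re, Real.exp_neg, ← one_div]
      exact one_div_le_one_div_of_le two_pos (by linarith [Real.add_one_le_exp (-w.re)])
    rw [max_eq_right (by linarith), Real.exp_zero]
    exact le_trans (by linarith) (neg_le_abs _)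

lemma norm_mordellKernel_le {u : ℂ} (hu : 1 ≤ |u.im|) :
    ‖mordellKernel v u‖ ≤ 2 * Real.exp (-(2 * π * (u * v).im) - max (-(2 * π * u.im)) 0) := by
  have hre (w : ℂ) : (2 * π * I * w).re = -(2 * π * w.im) := by
    simp [mul_assoc, mul_re]
  have hlarge : 1 ≤ |(2 * π * I * u).re| := by
    rw [hre, abs_neg, abs_mul, abs_of_pos Real.two_pi_pos]
    nlinarith [Real.pi_gt_three]
  have hden := exp_max_div_two_le_norm_exp_sub_one hlarge
  rw [hre] at hden
  rw [mordellKernel, norm_div, norm_exp, mul_assoc (2 * π * I), hre, Real.exp_sub]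
  calc Real.exp (-(2 * π * (u * v).im)) / ‖exp (2 * π * I * u) - 1‖
      ≤ Real.exp (-(2 * π * (u * v).im)) / (Real.exp (max (-(2 * π * u.im)) 0) / 2) := by gcongr
    _ = _ := by field_simp

/-- The left side is, up to the factor `2 * π`, the exponent in `norm_mordellKernel_le`: it decays
at rate `(e^{iθ}v).im` to the right, where the maximum is dropped, and at the complementary rate to
the left, where the maximum dominates. -/
lemma neg_im_mul_lineParam_sub_max_le {z : ℂ} (hz : z.im ∈ Icc 0 (Real.sin θ)) :
    -(lineParam c θ z * v).im - max (-(lineParam c θ z).im) 0 ≤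
      |c * v.im| + Real.sin θ * (|(exp (θ * I) * v).re| + |Real.cos θ|) -
        min (exp (θ * I) * v).im (Real.sin θ - (exp (θ * I) * v).im) * |z.re| := by
  set e := exp (θ * I) * v with he
  have him : (lineParam c θ z * v).im = c * v.im + (z.re * e.im + z.im * e.re) := by
    rw [lineParam, add_mul, mul_right_comm, ← he, mul_comm e, add_im, im_ofReal_mul, mul_im]
  have hbound (r : ℝ) : |z.im * r| ≤ Real.sin θ * |r| := by
    rw [abs_mul, abs_of_nonneg hz.1]
    exact mul_le_mul_of_nonneg_right hz.2 (abs_nonneg r)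
  have hre := (neg_le_abs _).trans (hbound e.re)
  have hcos := (le_abs_self _).trans (hbound (Real.cos θ))
  have hcos' := (abs_nonneg _).trans (hbound (Real.cos θ))
  have hv := neg_le_abs (c * v.im)
  rw [him]
  rcases le_total 0 z.re with hx | hx
  · have hmin := mul_le_mul_of_nonneg_right (min_le_left e.im (Real.sin θ - e.im)) hx
    rw [abs_of_nonneg hx]
    linarith [le_max_right (-(lineParam c θ z).im) 0]
  · have hmin := mul_le_mul_of_nonneg_right (min_le_right e.im (Real.sin θ - e.im))
      (neg_nonneg.mpr hx)
    have hmax := le_max_left (-(lineParam c θ z).im) 0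
    rw [lineParam_im] at hmax ⊢
    rw [abs_of_nonpos hx]
    linarith

lemma isBigO_mordellKernel_comp_lineParam (hθ : 0 < Real.sin θ) :
    (fun z ↦ mordellKernel v (lineParam c θ z)) =O[stripEnds 0 (Real.sin θ)] fun z ↦ Real.exp
      (-(2 * π * min (exp (θ * I) * v).im (Real.sin θ - (exp (θ * I) * v).im)) * |z.re|) := by
  set M := |c * v.im| + Real.sin θ * (|(exp (θ * I) * v).re| + |Real.cos θ|)
  refine .of_bound (2 * Real.exp (2 * π * M)) (eventually_stripEnds.mpr ?_)
  filter_upwards [eventually_ge_atTop (1 + 1 / Real.sin θ)] with r hr z hzr hz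
  have hfar : 1 ≤ |(lineParam c θ z).im| := by
    have hcos : |z.im * Real.cos θ| ≤ Real.sin θ := by
      rw [abs_mul, abs_of_nonneg hz.1]
      exact (mul_le_of_le_one_right hz.1 (Real.abs_cos_le_one θ)).trans hz.2
    calc 1 = (1 + 1 / Real.sin θ) * Real.sin θ - Real.sin θ := by field_simp; ring
      _ ≤ |z.re * Real.sin θ| - |z.im * Real.cos θ| := by
        rw [abs_mul, abs_of_pos hθ, hzr]
        gcongr
      _ ≤ |(lineParam c θ z).im| := by
        rw [lineParam_im, ← abs_neg (z.im * Real.cos θ), ← sub_neg_eq_add]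
        exact abs_sub_abs_le_abs_sub _ _
  refine (norm_mordellKernel_le hfar).trans ?_
  rw [Real.norm_of_nonneg (Real.exp_nonneg _), mul_assoc 2 (Real.exp _), ← Real.exp_add]
  gcongr
  have hexp := mul_le_mul_of_nonneg_left (neg_im_mul_lineParam_sub_max_le (c := c) (v := v) hz)
    Real.two_pi_pos.le
  rw [mul_sub, mul_max_of_nonneg _ _ Real.two_pi_pos.le, mul_zero, mul_neg, mul_neg] at hexp
  linarith

lemma differentiableAt_mordellKernel_comp_lineParam (hc : c ∈ Ioo 0 1) (hθ : 0 < Real.sin θ)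
    {z : ℂ} (hz : z.im ∈ Icc 0 (Real.sin θ)) (hz' : lineParam c θ z ≠ 0) :
    DifferentiableAt ℂ (fun z ↦ mordellKernel v (lineParam c θ z)) z :=
  (differentiableAt_mordellKernel
    (mt (lineParam_eq_zero_of_exp_eq_one hc hθ hz) hz')).comp z (by unfold lineParam; fun_prop)

lemma integrable_mordellKernel_comp_lineParam (hc : c ∈ Ioo 0 1) (hθ : 0 < Real.sin θ)
    (hv : (exp (θ * I) * v).im ∈ Ioo 0 (Real.sin θ)) :
    Integrable fun t : ℝ ↦ mordellKernel v (lineParam c θ t) := by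
  have hne (t : ℝ) : lineParam c θ t ≠ 0 := fun h ↦ by
    have := im_eq_of_lineParam_eq_ofReal (h.trans ofReal_zero.symm)
    simp [hc.1.ne', hθ.ne'] at this
  have hcont : Continuous fun t : ℝ ↦ mordellKernel v (lineParam c θ t) :=
    continuous_iff_continuousAt.mpr fun t ↦
      (differentiableAt_mordellKernel_comp_lineParam hc hθ (by simp [hθ.le])
        (hne t)).continuousAt.comp continuous_ofReal.continuousAt
  have hδ := mul_pos Real.two_pi_pos (lt_min hv.1 (sub_pos.mpr hv.2))
  simpa using integrable_of_isBigO_stripEnds hδ (left_mem_Icc.mpr hθ.le)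
    (isBigO_mordellKernel_comp_lineParam (c := c) hθ) (by simpa using hcont)

lemma tendsto_sub_smul_mordellKernel_comp_lineParam :
    Tendsto (fun z ↦ (z - lineZero c θ) • mordellKernel v (lineParam c θ z))
      (𝓝[≠] (lineZero c θ)) (𝓝 ((exp (θ * I))⁻¹ * (2 * π * I)⁻¹)) := by
  have hline : Tendsto (lineParam c θ) (𝓝[≠] (lineZero c θ)) (𝓝[≠] 0) := by
    refine tendsto_nhdsWithin_iff.mpr ⟨?_, ?_⟩
    · have hcont : Continuous (lineParam c θ) := by unfold lineParam; fun_prop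
      exact (lineParam_lineZero (c := c) (θ := θ) ▸ hcont.tendsto _).mono_left nhdsWithin_le_nhds
    · filter_upwards [self_mem_nhdsWithin] with z hz using lineParam_ne_zero hz
  refine (((tendsto_mul_mordellKernel (v := v)).comp hline).const_mul
    (exp (θ * I))⁻¹).congr fun z ↦ ?_
  rw [Function.comp_apply, smul_eq_mul, lineParam_eq_mul_sub, mul_assoc,
    inv_mul_cancel_left₀ (exp_ne_zero _)]

theorem lineInt_mordellKernel (hc : c ∈ Ioo 0 1) (hθ : 0 < Real.sin θ)
    (hv : (exp (θ * I) * v).im ∈ Ioo 0 (Real.sin θ)) :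
    lineInt c θ (mordellKernel v) = 1 / (1 - exp (-(2 * π * I * v))) := by
  set q := exp (-(2 * π * I * v))
  set f : ℂ → ℂ := fun z ↦ mordellKernel v (lineParam c θ z)
  have hp : (lineZero c θ).im = c * Real.sin θ := by
    simpa using im_eq_of_lineParam_eq_ofReal (lineParam_lineZero.trans ofReal_zero.symm)
  have hf : DifferentiableOn ℂ f (im ⁻¹' Icc 0 (Real.sin θ) \ {lineZero c θ}) := fun z hz ↦
    (differentiableAt_mordellKernel_comp_lineParam hc hθ hz.1
      (lineParam_ne_zero hz.2)).differentiableWithinAt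
  have hends : Tendsto f (stripEnds 0 (Real.sin θ)) (𝓝 0) :=
    (isBigO_mordellKernel_comp_lineParam hθ).trans_tendsto (tendsto_exp_neg_mul_abs_stripEnds
      (mul_pos Real.two_pi_pos (lt_min hv.1 (sub_pos.mpr hv.2))))
  have bottom : Integrable fun x : ℝ ↦ f x := integrable_mordellKernel_comp_lineParam hc hθ hv
  have top (x : ℝ) : f (x + Real.sin θ * I) = q * f (x + Real.cos θ : ℝ) := by
    simp only [f, lineParam_add_sin_mul_I, mordellKernel_sub_one, ofReal_add, q]
  have residue := integral_sub_integral_eq_of_tendsto_smul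
    ⟨hp ▸ mul_pos hc.1 hθ, hp ▸ mul_lt_of_lt_one_left hθ hc.2⟩ hf
    tendsto_sub_smul_mordellKernel_comp_lineParam (by simpa using bottom)
    (by simpa only [top] using (bottom.comp_add_right (Real.cos θ)).const_mul q) hends
  have hJ : (1 - q) * ∫ t : ℝ, f t = (exp (θ * I))⁻¹ := by
    simp only [top, integral_const_mul, integral_add_right_eq_self fun x : ℝ ↦ f x] at residue
    rw [smul_eq_mul, mul_left_comm (2 * π * I), mul_inv_cancel₀ two_pi_I_ne_zero,
      mul_one] at residue
    simpa [sub_mul] using residue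
  have hq : 1 - q ≠ 0 := left_ne_zero_of_mul (hJ ▸ inv_ne_zero (exp_ne_zero _))
  calc lineInt c θ (mordellKernel v) = (∫ t : ℝ, f t) * exp (θ * I) := integral_mul_const _ _
    _ = 1 / (1 - q) := by
      rw [eq_div_iff hq, mul_right_comm, mul_comm _ (1 - q), hJ, inv_mul_cancel₀ (exp_ne_zero _)]

end Kernel

section LineIntegral

variable {a b θ φ : ℝ}

lemma lineInt_const_mul (k : ℂ) (f : ℂ → ℂ) :
    lineInt a θ (fun u ↦ k * f u) = k * lineInt a θ f := by
  simp only [lineInt, mul_assoc, integral_const_mul]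

lemma conj_lineInt (f : ℂ → ℂ) :
    starRingEnd ℂ (lineInt a θ f)
      = lineInt a (-θ) fun v ↦ starRingEnd ℂ (f (starRingEnd ℂ v)) := by
  rw [lineInt, ← integral_conj, lineInt]
  simp [← exp_conj]

lemma lineInt_lineInt_swap {F : ℂ → ℂ → ℂ}
    (hF : Integrable fun p : ℝ × ℝ ↦ F (lineParam a θ p.1) (lineParam b φ p.2)) :
    lineInt a θ (fun u ↦ lineInt b φ (F u)) = lineInt b φ fun v ↦ lineInt a θ fun u ↦ F u v := by
  simp only [lineInt, ← integral_mul_const]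
  rw [integral_integral_swap ((hF.mul_const (exp (φ * I))).mul_const (exp (θ * I)))]
  simp only [mul_right_comm _ (exp (φ * I))]

lemma im_exp_mul_lineParam_neg (s : ℝ) :
    (exp (θ * I) * lineParam b (-θ) s).im = b * Real.sin θ := by
  rw [lineParam, mul_add, ← mul_assoc, ← exp_add, add_im, mul_comm, im_ofReal_mul]
  simp [exp_ofReal_mul_I_im]

/-- On lines of opposite angles `(u - a) * (v - b)` is real, so the variables separate up to a
phase. -/
lemma mordellKernel_lineParam_lineParam (t s : ℝ) :
    mordellKernel (lineParam b (-θ) s) (lineParam a θ t)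
      = exp ((2 * π * (t * s - a * b) : ℝ) * I) *
        (mordellKernel b (lineParam a θ t) * exp (2 * π * I * a * lineParam b (-θ) s)) := by
  have hmul : exp (2 * π * I * lineParam a θ t * lineParam b (-θ) s)
      = exp ((2 * π * (t * s - a * b) : ℝ) * I) *
        (exp (2 * π * I * lineParam a θ t * b) * exp (2 * π * I * a * lineParam b (-θ) s)) := by
    have hunit : exp (θ * I) * exp ((-θ : ℝ) * I) = 1 := by rw [← exp_add]; simp
    rw [← exp_add, ← exp_add]
    congr 1
    simp only [lineParam]
    push_cast at hunit ⊢
    linear_combination (2 * π * I * t * s) * hunit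
  rw [mordellKernel, hmul, mordellKernel]
  ring

theorem lineInt_lineInt_mul_mordellKernel {g : ℂ → ℂ} (ha : a ∈ Ioo 0 1) (hb : b ∈ Ioo 0 1)
    (hθ : 0 < Real.sin θ) (hg : Integrable fun s : ℝ ↦
      g (lineParam b (-θ) s) * exp (2 * π * I * a * lineParam b (-θ) s)) :
    lineInt a θ (fun u ↦ lineInt b (-θ) fun v ↦ g v * mordellKernel v u)
      = lineInt b (-θ) fun v ↦ g v / (1 - exp (-(2 * π * I * v))) := by
  have hb_sin : b * Real.sin θ ∈ Ioo 0 (Real.sin θ) :=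
    ⟨mul_pos hb.1 hθ, mul_lt_of_lt_one_left hθ hb.2⟩
  have hkernel : Integrable fun t : ℝ ↦ mordellKernel b (lineParam a θ t) :=
    integrable_mordellKernel_comp_lineParam ha hθ (by
      simpa [mul_comm _ (b : ℂ), exp_ofReal_mul_I_im] using hb_sin)
  have hprod : Integrable fun p : ℝ × ℝ ↦
      g (lineParam b (-θ) p.2) * mordellKernel (lineParam b (-θ) p.2) (lineParam a θ p.1) := by
    refine ((hkernel.mul_prod hg).bdd_mul (c := 1)
      (f := fun p : ℝ × ℝ ↦ exp ((2 * π * (p.1 * p.2 - a * b) : ℝ) * I))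
      (Continuous.aestronglyMeasurable (by fun_prop))
      (.of_forall fun p ↦ (norm_exp_ofReal_mul_I _).le)).congr (.of_forall fun p ↦ ?_)
    simp only [mordellKernel_lineParam_lineParam]
    ring
  rw [lineInt_lineInt_swap hprod]
  refine integral_congr_ae (.of_forall fun s ↦ congrArg (· * _) ?_)
  change lineInt a θ (fun u ↦ g (lineParam b (-θ) s) * mordellKernel (lineParam b (-θ) s) u) = 
    g (lineParam b (-θ) s) / (1 - exp (-(2 * π * I * lineParam b (-θ) s)))
  rw [lineInt_const_mul, lineInt_mordellKernel ha hθ (by rwa [im_exp_mul_lineParam_neg]),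
    mul_one_div]

end LineIntegral

section Gaussian

variable {x τ : ℂ}

/-- The Gaussian whose transform against `e^{2πiuv}` along a line of slope `-1` is, up to a
constant, the numerator `e^{πiτu² + 2πixu}` of the Mordell integrand. -/
noncomputable def mordellGaussian (x τ v : ℂ) : ℂ :=
  exp (-(π * I * (v - x) ^ 2 / τ))

lemma exp_neg_pi_div_four_mul_I_sq : exp ((-(π / 4) : ℝ) * I) ^ 2 = -I := by
  rw [← exp_nat_mul, ← exp_neg_pi_div_two_mul_I]
  congr 1
  push_cast
  ring

lemma mordellGaussian_mul_exp_lineParam (c : ℝ) (u : ℂ) (s : ℝ) :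
    mordellGaussian x τ (lineParam c (-(π / 4)) s) *
        exp (2 * π * I * u * lineParam c (-(π / 4)) s) =
      exp (-(π / τ) * s ^ 2 + 2 * π * I * exp ((-(π / 4) : ℝ) * I) * (u - (c - x) / τ) * s +
        (-(π * I * (c - x) ^ 2 / τ) + 2 * π * I * u * c)) := by
  rw [mordellGaussian, ← exp_add]
  congr 1
  simp only [lineParam]
  linear_combination (-(π * I * s ^ 2 / τ)) * exp_neg_pi_div_four_mul_I_sq +
    (π * s ^ 2 / τ) * I_sq

lemma neg_pi_div_re_neg (hτ : 0 < τ.re) : (-(π / τ) : ℂ).re < 0 := by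
  have hτ0 : 0 < normSq τ := normSq_pos.mpr fun h ↦ by simp [h] at hτ
  rw [neg_re, neg_neg_iff_pos, div_eq_mul_inv, re_ofReal_mul, inv_re]
  positivity

lemma integrable_mordellGaussian_mul_exp_lineParam (hτ : 0 < τ.re) (c : ℝ) (u : ℂ) :
    Integrable fun s : ℝ ↦ mordellGaussian x τ (lineParam c (-(π / 4)) s) *
      exp (2 * π * I * u * lineParam c (-(π / 4)) s) := by
  simpa only [mordellGaussian_mul_exp_lineParam] using
    integrable_cexp_quadratic' (neg_pi_div_re_neg hτ) _ _

lemma lineInt_mordellGaussian_mul_exp (hτ : 0 < τ.re) (c : ℝ) (u : ℂ) :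
    lineInt c (-(π / 4)) (fun v ↦ mordellGaussian x τ v * exp (2 * π * I * u * v)) =
      exp (-(π / 4 * I)) * τ ^ (1 / 2 : ℂ) * exp (π * I * τ * u ^ 2 + 2 * π * I * x * u) := by
  set ω := exp ((-(π / 4) : ℝ) * I) with hω
  have hτ0 : τ ≠ 0 := fun h ↦ by simp [h] at hτ
  have hpi : (π : ℂ) ≠ 0 := ofReal_ne_zero.mpr Real.pi_ne_zero
  have hexp : -(π * I * (c - x) ^ 2 / τ) + 2 * π * I * u * c -
      (2 * π * I * ω * (u - (c - x) / τ)) ^ 2 / (4 * -(π / τ)) =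
      π * I * τ * u ^ 2 + 2 * π * I * x * u := by
    have hsq : (2 * π * I * ω * (u - (c - x) / τ)) ^ 2 =
        4 * π ^ 2 * I * (u - (c - x) / τ) ^ 2 := by
      simp only [mul_pow, I_sq, hω, exp_neg_pi_div_four_mul_I_sq]
      ring
    rw [hsq]
    field_simp
    ring
  calc lineInt c (-(π / 4)) (fun v ↦ mordellGaussian x τ v * exp (2 * π * I * u * v))
      = (∫ s : ℝ, mordellGaussian x τ (lineParam c (-(π / 4)) s) *
          exp (2 * π * I * u * lineParam c (-(π / 4)) s)) * ω := integral_mul_const _ _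
    _ = (π / - -(π / τ)) ^ (1 / 2 : ℂ) * exp (π * I * τ * u ^ 2 + 2 * π * I * x * u) * ω := by
        simp only [mordellGaussian_mul_exp_lineParam]
        rw [integral_cexp_quadratic (neg_pi_div_re_neg hτ), ← hω, hexp]
    _ = _ := by
        rw [neg_neg, div_div_cancel₀ hpi]
        simp only [hω, ofReal_neg, ofReal_div, ofReal_ofNat, neg_mul]
        ring

end Gaussian

lemma mordellPhi_eq_lineInt_lineInt {x τ : ℂ} (hτ : 0 < τ.re) (c d : ℝ) :
    mordellPhi x τ c = exp (π / 4 * I) / τ ^ (1 / 2 : ℂ) *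
      lineInt c (π / 4) fun u ↦ lineInt d (-(π / 4)) fun v ↦
        mordellGaussian x τ v * mordellKernel v u := by
  have hsqrt : τ ^ (1 / 2 : ℂ) ≠ 0 := by
    rw [Ne, cpow_eq_zero_iff]
    rintro ⟨rfl, -⟩
    simp at hτ
  rw [← lineInt_const_mul, mordellPhi]
  congr 1 with u
  have hkernel (v : ℂ) : mordellGaussian x τ v * mordellKernel v u =
      (exp (2 * π * I * u) - 1)⁻¹ * (mordellGaussian x τ v * exp (2 * π * I * u * v)) := by
    rw [mordellKernel]
    ring
  simp only [hkernel]
  rw [lineInt_const_mul, lineInt_mordellGaussian_mul_exp hτ, exp_neg]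
  field_simp

lemma conj_mordellPhi (x τ : ℂ) (c : ℝ) :
    starRingEnd ℂ (mordellPhi x τ c) = lineInt c (-(π / 4)) fun v ↦
      exp (-(π * I * starRingEnd ℂ τ * v ^ 2) - 2 * π * I * starRingEnd ℂ x * v) /
        (exp (-(2 * π * I * v)) - 1) := by
  rw [mordellPhi, conj_lineInt]
  simp [← exp_conj, sub_eq_add_neg, conj_ofNat]

lemma mordellGaussian_div_one_sub (x τ v q : ℂ) :
    mordellGaussian x τ v / (1 - q) = -exp (-(π * I * x ^ 2 / τ)) *
      (exp (-(π * I * (1 / τ) * v ^ 2) - 2 * π * I * (-x / τ) * v) / (q - 1)) := by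
  have hexp : mordellGaussian x τ v = exp (-(π * I * x ^ 2 / τ)) *
      exp (-(π * I * (1 / τ) * v ^ 2) - 2 * π * I * (-x / τ) * v) := by
    rw [mordellGaussian, ← exp_add]
    ring_nf
  rw [hexp, ← neg_sub q 1, div_neg]
  ring

/-- Functional equation of the Mordell integral for complex `τ` with `Re τ > 0`. -/
theorem mordell_functional_equation (x τ : ℂ) (hτ : 0 < τ.re) (c₁ c₂ : ℝ)
    (hc₁ : 0 < c₁) (hc₁' : c₁ < 1) (hc₂ : 0 < c₂) (hc₂' : c₂ < 1) :
    mordellPhi x τ c₁ =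
      -(Complex.exp ((π : ℂ) * Complex.I * (1 / 4 - x ^ 2 / τ)) / τ ^ (1 / 2 : ℂ)) *
        starRingEnd ℂ
          (mordellPhi (-(starRingEnd ℂ x) / starRingEnd ℂ τ) (1 / starRingEnd ℂ τ) c₂) := by
  have hsin : 0 < Real.sin (π / 4) := Real.sin_pos_of_pos_of_lt_pi (by positivity)
    (by linarith [Real.pi_pos])
  calc mordellPhi x τ c₁
      = exp (π / 4 * I) / τ ^ (1 / 2 : ℂ) * lineInt c₂ (-(π / 4)) fun v ↦
          mordellGaussian x τ v / (1 - exp (-(2 * π * I * v))) := by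
        rw [mordellPhi_eq_lineInt_lineInt hτ c₁ c₂, lineInt_lineInt_mul_mordellKernel
          ⟨hc₁, hc₁'⟩ ⟨hc₂, hc₂'⟩ hsin (integrable_mordellGaussian_mul_exp_lineParam hτ c₂ c₁)]
    _ = -(exp (π / 4 * I) * exp (-(π * I * x ^ 2 / τ)) / τ ^ (1 / 2 : ℂ)) * starRingEnd ℂ
          (mordellPhi (-(starRingEnd ℂ x) / starRingEnd ℂ τ) (1 / starRingEnd ℂ τ) c₂) := by
        simp only [conj_mordellPhi, mordellGaussian_div_one_sub, lineInt_const_mul, map_div₀,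
          map_neg, map_one, conj_conj]
        ring
    _ = _ := by
        rw [← exp_add]
        ring_nf
end

section
/- Let s be a complex number with Re(s) > 0 and let u be a complex number with Re(e^{iπ/4}·u) > 0. Then the integral of e^{2πizu}·z^{s−1} dz along the ray from 0 to e^{3πi/4}·∞, i.e. ∫_0^∞ e^{2πi·u·e^{3πi/4}·r}·(e^{3πi/4}·r)^{s−1}·e^{3πi/4} dr, converges and equals e^{iπs/2}·(2π)^{−s}·Γ(s)·u^{−s}. -/
open scoped Real
open MeasureTheory Set Complex

open Filter Topology

/-!
For `w > 0` the integral `∫ t in Ioi 0, t ^ (s - 1) * exp (-(w * t))` is `w ^ (-s) * Γ(s)` by the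
substitution `t ↦ w * t`. Both sides are holomorphic in `w` on the right half-plane, hence equal
there. On the ray `z = c * r` the integrand `exp (-(a * z)) * z ^ (s - 1) dz` is
`c ^ s * (r ^ (s - 1) * exp (-((a * c) * r))) dr`, so the ray integral is the case `w = a * c`. Here
`w = 2π v` with `v = exp (iπ / 4) * u` in the right half-plane, and since the angle `π / 4` is at
most `π / 2`, the branch cut is not crossed in splitting `v ^ (-s)`.
-/

section Cpow

theorem cpow_sub_one_mul_self {x : ℂ} (hx : x ≠ 0) (a : ℂ) : x ^ (a - 1) * x = x ^ a := by
  rw [cpow_sub _ _ hx, cpow_one, div_mul_cancel₀ _ hx]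

theorem mul_cpow_of_arg_add_arg_mem_Ioc {x y : ℂ} (h : x.arg + y.arg ∈ Ioc (-π) π) (a : ℂ) :
    (x * y) ^ a = x ^ a * y ^ a := by
  rcases eq_or_ne a 0 with rfl | ha
  · simp
  rcases eq_or_ne x 0 with rfl | hx
  · simp [zero_cpow ha]
  rcases eq_or_ne y 0 with rfl | hy
  · simp [zero_cpow ha]
  rw [cpow_def_of_ne_zero (mul_ne_zero hx hy), log_mul hx hy h, add_mul, Complex.exp_add,
    ← cpow_def_of_ne_zero hx, ← cpow_def_of_ne_zero hy]

theorem mul_ofReal_cpow {r : ℝ} (hr : 0 ≤ r) (z a : ℂ) :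
    (z * r) ^ a = z ^ a * (r : ℂ) ^ a := by
  apply mul_cpow_of_arg_add_arg_mem_Ioc
  simpa [arg_ofReal_of_nonneg hr] using arg_mem_Ioc z

theorem exp_cpow {x : ℂ} (hx : x.im ∈ Ioc (-π) π) (a : ℂ) :
    cexp x ^ a = cexp (x * a) := by
  rw [cpow_def_of_ne_zero (Complex.exp_ne_zero x), log_exp hx.1 hx.2]

theorem exp_mul_cpow_of_re_pos {x u : ℂ} (hx : |x.im| ≤ π / 2)
    (hu : 0 < (cexp x * u).re) (a : ℂ) :
    (cexp x * u) ^ a = cexp (x * a) * u ^ a := by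
  set v := cexp x * u with hv
  have hπ := Real.pi_pos
  obtain ⟨hx₁, hx₂⟩ := abs_le.mp hx
  obtain ⟨hv₁, hv₂⟩ := abs_lt.mp (abs_arg_lt_pi_div_two_iff.mpr (Or.inl hu))
  have hx_mem : (-x).im ∈ Ioc (-π) π := by
    rw [neg_im]
    exact ⟨by linarith, by linarith⟩
  have harg : (cexp (-x)).arg = -x.im := by
    rw [← log_im, log_exp hx_mem.1 hx_mem.2, neg_im]
  have hu_eq : u = cexp (-x) * v := by
    rw [hv, ← mul_assoc, ← Complex.exp_add, neg_add_cancel, Complex.exp_zero, one_mul]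
  have hsum : (cexp (-x)).arg + v.arg ∈ Ioc (-π) π := by
    rw [harg]
    exact ⟨by linarith, by linarith⟩
  rw [hu_eq, mul_cpow_of_arg_add_arg_mem_Ioc hsum, exp_cpow hx_mem, ← mul_assoc,
    ← Complex.exp_add, neg_mul, add_neg_cancel, Complex.exp_zero, one_mul]

end Cpow

theorem eqOn_of_preconnected_of_frequently_eq_ofReal {E : Type*} [NormedAddCommGroup E]
    [NormedSpace ℂ E] {f g : ℂ → E} {U : Set ℂ} (hf : AnalyticOnNhd ℂ f U)
    (hg : AnalyticOnNhd ℂ g U) (hU : IsPreconnected U) {x : ℝ} (hx : (x : ℂ) ∈ U)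
    (hfg : ∃ᶠ y : ℝ in 𝓝[≠] x, f y = g y) : EqOn f g U := by
  have hne : MapsTo ((↑) : ℝ → ℂ) {x}ᶜ {(x : ℂ)}ᶜ := fun _ hy => ofReal_injective.ne hy
  exact hf.eqOn_of_preconnected_of_frequently_eq hg hU hx
    ((continuous_ofReal.continuousWithinAt.tendsto_nhdsWithin hne).frequently hfg)

section Mellin

variable {s w : ℂ}

theorem mellinConvergent_exp_neg_mul (hs : 0 < s.re) (hw : 0 < w.re) :
    MellinConvergent (fun t : ℝ => cexp (-(w * t))) s := by
  have hcont : Continuous fun t : ℝ => cexp (-(w * t)) := by fun_prop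
  refine mellinConvergent_of_isBigO_rpow_exp hw (hcont.locallyIntegrable.locallyIntegrableOn _)
    (.of_norm_le fun t => ?_) ?_ hs
  · simp [Complex.norm_exp]
  · simpa using hcont.continuousAt.continuousWithinAt.tendsto.isBigO_one ℝ

theorem norm_exp_neg_mul_le {z : ℂ} {t : ℝ} (ht : 0 ≤ t) (hwz : w.re ≤ z.re) :
    ‖cexp (-(z * t))‖ ≤ ‖cexp (-(w * t))‖ := by
  simp only [Complex.norm_exp, neg_re, re_mul_ofReal]
  gcongr

-- The exponent `s + 1 - 1` is the shape in which `mellin` at `s + 1` unfolds.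
theorem hasDerivAt_cpow_smul_exp_neg_mul {t : ℝ} (ht : t ≠ 0) (s z : ℂ) :
    HasDerivAt (fun z : ℂ => (t : ℂ) ^ (s - 1) • cexp (-(z * t)))
      (-((t : ℂ) ^ (s + 1 - 1) • cexp (-(z * t)))) z := by
  refine ((hasDerivAt_mul_const (t : ℂ)).fun_neg.cexp.fun_const_smul
    ((t : ℂ) ^ (s - 1))).congr_deriv ?_
  rw [add_sub_cancel_right, ← cpow_sub_one_mul_self (ofReal_ne_zero.mpr ht) s, smul_eq_mul,
    smul_eq_mul]
  ring

theorem hasDerivAt_mellin_exp_neg_mul (hs : 0 < s.re) (hw : 0 < w.re) :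
    HasDerivAt (fun z : ℂ => mellin (fun t : ℝ => cexp (-(z * t))) s)
      (-mellin (fun t : ℝ => cexp (-(w * t))) (s + 1)) w := by
  have hs' : 0 < (s + 1).re := by
    rw [add_re, one_re]
    linarith
  have hhalf : 0 < ((w.re / 2 : ℝ) : ℂ).re := by simpa using hw
  have hnhds : {z : ℂ | w.re / 2 < z.re} ∈ 𝓝 w :=
    (isOpen_lt continuous_const continuous_re).mem_nhds (half_lt_self hw)
  have hmeas : ∀ᶠ z in 𝓝 w, AEStronglyMeasurable
      (fun t : ℝ => (t : ℂ) ^ (s - 1) • cexp (-(z * t))) (volume.restrict (Ioi 0)) := by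
    filter_upwards [hnhds] with z hz
    exact (mellinConvergent_exp_neg_mul hs ((half_pos hw).trans hz)).aestronglyMeasurable
  have hbound : ∀ (t : ℝ), 0 < t → ∀ z ∈ {z : ℂ | w.re / 2 < z.re},
      ‖-((t : ℂ) ^ (s + 1 - 1) • cexp (-(z * t)))‖ ≤
        ‖(t : ℂ) ^ (s + 1 - 1) • cexp (-((w.re / 2 : ℝ) * t))‖ := by
    intro t ht z hz
    rw [norm_neg, norm_smul, norm_smul]
    exact mul_le_mul_of_nonneg_left (norm_exp_neg_mul_le ht.le hz.le) (norm_nonneg _)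
  have hmain := (hasDerivAt_integral_of_dominated_loc_of_deriv_le hnhds hmeas
    (mellinConvergent_exp_neg_mul hs hw)
    (mellinConvergent_exp_neg_mul hs' hw).neg.aestronglyMeasurable
    ((ae_restrict_mem measurableSet_Ioi).mono hbound) (mellinConvergent_exp_neg_mul hs' hhalf).norm
    ((ae_restrict_mem measurableSet_Ioi).mono fun _ ht z _ =>
      hasDerivAt_cpow_smul_exp_neg_mul (ne_of_gt ht) s z)).2
  simpa only [mellin, integral_neg] using hmain

theorem hasMellin_exp_neg_mul (hs : 0 < s.re) (hw : 0 < w.re) :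
    HasMellin (fun t : ℝ => cexp (-(w * t))) s (w ^ (-s) * Gamma s) := by
  refine ⟨mellinConvergent_exp_neg_mul hs hw, ?_⟩
  have hopen : IsOpen {z : ℂ | 0 < z.re} := isOpen_lt continuous_const continuous_re
  have hmellin : DifferentiableOn ℂ
      (fun z : ℂ => mellin (fun t : ℝ => cexp (-(z * t))) s) {z | 0 < z.re} := fun z hz =>
    (hasDerivAt_mellin_exp_neg_mul hs hz).differentiableAt.differentiableWithinAt
  have hcpow : DifferentiableOn ℂ (fun z : ℂ => z ^ (-s) * Gamma s) {z | 0 < z.re} := fun z hz =>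
    ((differentiableAt_id.cpow_const (Or.inl hz)).mul_const _).differentiableWithinAt
  have hreal : ∀ x : ℝ, 0 < x →
      mellin (fun t : ℝ => cexp (-(x * t))) s = (x : ℂ) ^ (-s) * Gamma s := by
    intro x hx
    simp only [mellin, smul_eq_mul]
    rw [integral_cpow_mul_exp_neg_mul_Ioi hs hx, one_div, inv_cpow_ofReal_nonneg hx.le, cpow_neg]
  have hnear : ∀ᶠ x : ℝ in 𝓝[≠] 1,
      mellin (fun t : ℝ => cexp (-(x * t))) s = (x : ℂ) ^ (-s) * Gamma s :=
    ((lt_mem_nhds one_pos).filter_mono nhdsWithin_le_nhds).mono hreal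
  exact eqOn_of_preconnected_of_frequently_eq_ofReal (hmellin.analyticOnNhd hopen)
    (hcpow.analyticOnNhd hopen) (convex_halfSpace_re_gt 0).isPreconnected (x := 1) (by simp)
    hnear.frequently hw

end Mellin

section Ray

variable {a c s : ℂ}

theorem exp_neg_mul_cpow_mul_eqOn_ray (hc : c ≠ 0) :
    EqOn (fun r : ℝ => cexp (-(a * (c * r))) * (c * r) ^ (s - 1) * c)
      (fun r : ℝ => c ^ s * ((r : ℂ) ^ (s - 1) • cexp (-(a * c * r)))) (Ioi 0) := by
  intro r hr
  simp only [mul_ofReal_cpow (mem_Ioi.mp hr).le, ← cpow_sub_one_mul_self hc s, smul_eq_mul,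
    ← mul_assoc]
  ring

theorem integrableOn_exp_neg_mul_cpow_ray (hs : 0 < s.re) (hac : 0 < (a * c).re) :
    IntegrableOn (fun r : ℝ => cexp (-(a * (c * r))) * (c * r) ^ (s - 1) * c) (Ioi 0) := by
  have hc : c ≠ 0 := by rintro rfl; simp at hac
  exact IntegrableOn.congr_fun ((mellinConvergent_exp_neg_mul hs hac).const_mul (c ^ s))
    (exp_neg_mul_cpow_mul_eqOn_ray hc).symm measurableSet_Ioi

theorem integral_exp_neg_mul_cpow_ray (hs : 0 < s.re) (hac : 0 < (a * c).re) :
    ∫ r in Ioi (0 : ℝ), cexp (-(a * (c * r))) * (c * r) ^ (s - 1) * c =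
      c ^ s * (a * c) ^ (-s) * Gamma s := by
  have hc : c ≠ 0 := by rintro rfl; simp at hac
  rw [setIntegral_congr_fun measurableSet_Ioi (exp_neg_mul_cpow_mul_eqOn_ray hc),
    integral_const_mul, mul_assoc]
  exact congrArg (c ^ s * ·) (hasMellin_exp_neg_mul hs hac).2

end Ray

theorem neg_two_pi_I_mul_mul_exp_three_pi_I_div_four (u : ℂ) :
    -(2 * (π : ℂ) * I * u) * cexp (3 * (π : ℂ) * I / 4) =
      cexp ((π : ℂ) * I / 4) * u * (2 * π : ℝ) := by
  have hsplit : 3 * (π : ℂ) * I / 4 = π / 2 * I + π * I / 4 := by ring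
  rw [hsplit, Complex.exp_add, exp_pi_div_two_mul_I]
  push_cast
  linear_combination (-2 * π * u * cexp (π * I / 4)) * I_sq

theorem exp_three_pi_I_div_four_cpow_mul_cpow_neg (s : ℂ) {u : ℂ}
    (hu : 0 < (cexp ((π : ℂ) * I / 4) * u).re) :
    cexp (3 * (π : ℂ) * I / 4) ^ s *
        (cexp ((π : ℂ) * I / 4) * u * (2 * π : ℝ)) ^ (-s) =
      cexp ((π : ℂ) * I * s / 2) * (2 * (π : ℂ)) ^ (-s) * u ^ (-s) := by
  have hπ := Real.pi_pos
  have him : ((π : ℂ) * I / 4).im = π / 4 := by simp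
  have him' : (3 * (π : ℂ) * I / 4).im = 3 * π / 4 := by simp
  have hquarter : |((π : ℂ) * I / 4).im| ≤ π / 2 := by
    rw [him, abs_of_pos (by positivity)]
    linarith
  have hthree : (3 * (π : ℂ) * I / 4).im ∈ Ioc (-π) π := by
    rw [him']
    exact ⟨by linarith, by linarith⟩
  have hexp : cexp ((π : ℂ) * I * s / 2) =
      cexp (3 * (π : ℂ) * I / 4 * s) * cexp ((π : ℂ) * I / 4 * -s) := by
    rw [← Complex.exp_add]
    ring_nf
  rw [exp_cpow hthree, mul_ofReal_cpow (by positivity), exp_mul_cpow_of_re_pos hquarter hu, hexp]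
  push_cast
  ring

/-- Mellin-type integral along the ray from `0` to `e^{3πi/4}·∞`:
for `Re s > 0` and `Re (e^{iπ/4} u) > 0` it converges and evaluates to
`e^{iπs/2}·(2π)^{-s}·Γ(s)·u^{-s}`. -/
theorem ray_integral_mellin (s u : ℂ) (hs : 0 < s.re)
    (hu : 0 < (Complex.exp ((π : ℂ) * Complex.I / 4) * u).re) :
    MeasureTheory.IntegrableOn (fun r : ℝ =>
      Complex.exp (2 * (π : ℂ) * Complex.I * u *
          (Complex.exp (3 * (π : ℂ) * Complex.I / 4) * (r : ℂ))) *
        (Complex.exp (3 * (π : ℂ) * Complex.I / 4) * (r : ℂ)) ^ (s - 1) *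
        Complex.exp (3 * (π : ℂ) * Complex.I / 4)) (Set.Ioi (0 : ℝ)) ∧
    (∫ r in Set.Ioi (0 : ℝ),
      Complex.exp (2 * (π : ℂ) * Complex.I * u *
          (Complex.exp (3 * (π : ℂ) * Complex.I / 4) * (r : ℂ))) *
        (Complex.exp (3 * (π : ℂ) * Complex.I / 4) * (r : ℂ)) ^ (s - 1) *
        Complex.exp (3 * (π : ℂ) * Complex.I / 4)) =
      Complex.exp ((π : ℂ) * Complex.I * s / 2) * (2 * (π : ℂ)) ^ (-s) *
        Complex.Gamma s * u ^ (-s) := by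
  have hrot := neg_two_pi_I_mul_mul_exp_three_pi_I_div_four u
  have hre : 0 < (-(2 * (π : ℂ) * I * u) * cexp (3 * (π : ℂ) * I / 4)).re := by
    rw [hrot, re_mul_ofReal]
    positivity
  have hint := integrableOn_exp_neg_mul_cpow_ray hs hre
  have hval := integral_exp_neg_mul_cpow_ray hs hre
  rw [hrot, exp_three_pi_I_div_four_cpow_mul_cpow_neg s hu,
    mul_right_comm _ (u ^ (-s))] at hval
  simp only [neg_mul, neg_neg] at hint hval
  exact ⟨hint, hval⟩
end

section
/- Let τ be a complex number with Re(τ) > 0. Then the function x ↦ Φ(x, τ) is an entire function of x, i.e. it is complex differentiable at every point x ∈ ℂ (in particular, the defining integral converges for every x ∈ ℂ). -/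
open scoped Real
open MeasureTheory Set Complex

/-! On the line `u = a + w t` the kernel `(e^{2πiu} - 1)⁻¹` is bounded as soon as the line misses
its poles, the integers: `|e^{2πiu}|` tends to `0` at one end and to `∞` at the other, except on
horizontal lines, where the kernel is periodic. If `Im (τ w²) > 0`, the factor `e^{πiτu²}` is a
Gaussian in `t`, which absorbs `e^{2πixu}` for every `x`. The derivative in `x` costs only a factor
`2πiu`, and `|u|` is dominated by exponentials `|e^{zu}|`, so that integrability for all `x` already
implies differentiability under the integral sign. -/

section ParametricExponential

lemma rexp_norm_le_sum_norm_cexp (z : ℂ) :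
    rexp ‖z‖ ≤ ‖cexp ((1 + I) * z)‖ + ‖cexp ((1 - I) * z)‖ + ‖cexp (-(1 + I) * z)‖ +
      ‖cexp (-(1 - I) * z)‖ := by
  calc rexp ‖z‖ ≤ rexp (|z.re| + |z.im|) := Real.exp_le_exp.2 (norm_le_abs_re_add_abs_im z)
    _ = rexp |z.re| * rexp |z.im| := Real.exp_add _ _
    _ ≤ (rexp z.re + rexp (-z.re)) * (rexp z.im + rexp (-z.im)) := by
      gcongr <;> exact Real.exp_abs_le _
    _ = _ := by
      simp only [add_mul, mul_add, ← Real.exp_add, Complex.norm_exp]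
      simp only [one_mul, add_re, mul_re, I_re, I_im, zero_mul, zero_sub, sub_mul, sub_re, add_mul,
        neg_mul, neg_re]
      ring_nf

variable {α E : Type*} [MeasurableSpace α] {μ : Measure α} [NormedAddCommGroup E]
  [NormedSpace ℂ E] {φ : α → ℂ} {f : α → E}

lemma integrable_rexp_mul_norm_smul (hφ : AEStronglyMeasurable φ μ)
    (hf : ∀ x : ℂ, Integrable (fun a ↦ cexp (x * φ a) • f a) μ) (r : ℝ) :
    Integrable (fun a ↦ rexp (r * ‖φ a‖) • f a) μ := by
  have hf_meas : AEStronglyMeasurable f μ := by simpa using (hf 0).aestronglyMeasurable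
  have hsum := (((hf ((1 + I) * r)).norm.add (hf ((1 - I) * r)).norm).add
    (hf (-(1 + I) * r)).norm).add (hf (-(1 - I) * r)).norm
  refine hsum.mono'
    ((Real.continuous_exp.comp_aestronglyMeasurable (hφ.norm.const_mul r)).smul hf_meas)
    (.of_forall fun a ↦ ?_)
  have hr : r * ‖φ a‖ ≤ ‖r * φ a‖ := by
    rw [norm_mul, norm_real]
    gcongr
    exact Real.le_norm_self r
  have hexp := (Real.exp_le_exp.2 hr).trans (rexp_norm_le_sum_norm_cexp (r * φ a))
  simpa only [norm_smul, Real.norm_eq_abs, Real.abs_exp, add_mul, mul_assoc, Pi.add_apply]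
    using mul_le_mul_of_nonneg_right hexp (norm_nonneg (f a))

lemma norm_mul_cexp_mul_le (x z : ℂ) : ‖z * cexp (x * z)‖ ≤ rexp ((‖x‖ + 1) * ‖z‖) := by
  calc ‖z * cexp (x * z)‖ = ‖z‖ * ‖cexp (x * z)‖ := norm_mul _ _
    _ ≤ rexp ‖z‖ * rexp (‖x‖ * ‖z‖) := by
      gcongr
      · linarith [Real.add_one_le_exp ‖z‖]
      · exact norm_mul x z ▸ norm_exp_le_exp_norm (x * z)
    _ = rexp ((‖x‖ + 1) * ‖z‖) := by rw [← Real.exp_add]; ring_nf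

theorem differentiable_integral_cexp_mul_smul (hφ : AEStronglyMeasurable φ μ)
    (hf : ∀ x : ℂ, Integrable (fun a ↦ cexp (x * φ a) • f a) μ) :
    Differentiable ℂ fun x : ℂ ↦ ∫ a, cexp (x * φ a) • f a ∂μ := by
  intro x₀
  have hf_meas : AEStronglyMeasurable f μ := by simpa using (hf 0).aestronglyMeasurable
  have hderiv_meas : AEStronglyMeasurable (fun a ↦ (φ a * cexp (x₀ * φ a)) • f a) μ :=
    (hφ.mul (continuous_exp.comp_aestronglyMeasurable (hφ.const_mul x₀))).smul hf_meas
  refine (hasDerivAt_integral_of_dominated_loc_of_deriv_le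
    (F' := fun x a ↦ (φ a * cexp (x * φ a)) • f a) (Metric.ball_mem_nhds x₀ one_pos)
    (.of_forall fun x ↦ (hf x).aestronglyMeasurable) (hf x₀) hderiv_meas
    (.of_forall fun a x hx ↦ ?_) (integrable_rexp_mul_norm_smul hφ hf (‖x₀‖ + 2)).norm
    (.of_forall fun a x _ ↦ ?_)).2.differentiableAt
  · rw [norm_smul, norm_smul, Real.norm_eq_abs, Real.abs_exp]
    have hx_norm : ‖x‖ + 1 ≤ ‖x₀‖ + 2 := by
      linarith [norm_le_norm_add_norm_sub x₀ x, norm_sub_rev x x₀, mem_ball_iff_norm.1 hx]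
    gcongr
    exact (norm_mul_cexp_mul_le x (φ a)).trans (by gcongr)
  · simpa [mul_comm] using (((hasDerivAt_id x).mul_const (φ a)).cexp).smul_const (f a)

end ParametricExponential

section Kernel

open Filter

lemma norm_inv_cexp_sub_one_le_two {z : ℂ} (hz : 1 ≤ |z.re|) : ‖(cexp z - 1)⁻¹‖ ≤ 2 := by
  rw [norm_inv]
  refine inv_le_of_inv_le₀ two_pos ?_
  have hdist : |rexp z.re - 1| ≤ ‖cexp z - 1‖ := by
    simpa [Complex.norm_exp] using abs_norm_sub_norm_le (cexp z) 1
  refine le_trans ?_ hdist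
  rcases le_abs'.1 hz with hneg | hpos
  · have hexp : rexp z.re ≤ 2⁻¹ := by
      rw [← inv_inv (rexp z.re), ← Real.exp_neg]
      exact inv_anti₀ two_pos (by linarith [Real.add_one_le_exp (-z.re)])
    exact le_trans (by linarith) (neg_le_abs _)
  · exact le_trans (by linarith [Real.add_one_le_exp z.re]) (le_abs_self _)

lemma periodic_cexp_add_ofReal_mul_I_mul (p : ℂ) {s : ℝ} (hs : s ≠ 0) :
    Function.Periodic (fun t : ℝ ↦ cexp (p + s * I * t)) (2 * π / s) := by
  intro t
  have hs' : (s : ℂ) ≠ 0 := ofReal_ne_zero.2 hs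
  have hshift : p + s * I * ((t + 2 * π / s : ℝ) : ℂ) = p + s * I * t + 2 * π * I := by
    push_cast
    field_simp
    ring
  simpa only [hshift] using exp_periodic (p + s * I * t)

lemma tendsto_abs_re_add_mul_cocompact (p : ℂ) {q : ℂ} (hq : q.re ≠ 0) :
    Tendsto (fun t : ℝ ↦ |(p + q * t).re|) (cocompact ℝ) atTop := by
  have hlin : Tendsto (fun t : ℝ ↦ -|p.re| + |q.re| * ‖t‖) (cocompact ℝ) atTop :=
    tendsto_atTop_add_const_left _ _
      (tendsto_norm_cocompact_atTop.const_mul_atTop (abs_pos.2 hq))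
  refine tendsto_atTop_mono (fun t ↦ ?_) hlin
  have hre : (p + q * t).re = p.re + q.re * t := by simp
  rw [hre, Real.norm_eq_abs, ← abs_mul, neg_add_eq_sub, add_comm p.re]
  exact abs_sub_abs_le_abs_add _ _

theorem isBounded_range_inv_cexp_sub_one {p q : ℂ} (h : ∀ t : ℝ, cexp (p + q * t) ≠ 1) :
    Bornology.IsBounded (range fun t : ℝ ↦ (cexp (p + q * t) - 1)⁻¹) := by
  have hcont : Continuous fun t : ℝ ↦ (cexp (p + q * t) - 1)⁻¹ :=
    Continuous.inv₀ (by fun_prop) fun t ↦ sub_ne_zero.2 (h t)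
  rcases eq_or_ne q 0 with rfl | hq
  · simp
  rcases eq_or_ne q.re 0 with hre | hre
  · obtain ⟨s, rfl⟩ : ∃ s : ℝ, q = s * I := ⟨q.im, by simpa [hre] using (re_add_im q).symm⟩
    have hs : s ≠ 0 := by simpa using hq
    have hper := (periodic_cexp_add_ofReal_mul_I_mul p hs).comp fun z ↦ (z - 1)⁻¹
    exact hper.isBounded_of_continuous (div_ne_zero Real.two_pi_pos.ne' hs) hcont
  · refine hcont.isBounded_range_iff_isBigO.2 (.of_bound 2 ?_)
    filter_upwards [(tendsto_abs_re_add_mul_cocompact p hre).eventually_ge_atTop 1] with t ht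
    simpa using norm_inv_cexp_sub_one_le_two ht

end Kernel

section MordellIntegral

/-- The integrand `e^{πiτu² + 2πixu} / (e^{2πiu} - 1)` of the Mordell integral, as a function of the
point `u` on the path. -/
noncomputable def mordellIntegrand (x τ u : ℂ) : ℂ :=
  cexp (π * I * τ * u ^ 2 + 2 * π * I * x * u) / (cexp (2 * π * I * u) - 1)

lemma mordellIntegrand_eq_cexp_mul (x τ u : ℂ) :
    mordellIntegrand x τ u = cexp (x * (2 * π * I * u)) * mordellIntegrand 0 τ u := by
  rw [mordellIntegrand, mordellIntegrand, ← mul_div_assoc, ← Complex.exp_add]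
  ring_nf

lemma cexp_two_pi_I_mul_ne_one {u : ℂ} (hu : ∀ n : ℤ, u ≠ n) : cexp (2 * π * I * u) ≠ 1 := by
  rw [Ne, exp_eq_one_iff]
  rintro ⟨n, hn⟩
  exact hu n (mul_left_cancel₀ two_pi_I_ne_zero (hn.trans (mul_comm _ _)))

lemma integrable_mordellIntegrand_add_mul {τ a w : ℂ} (hτ : 0 < (τ * w ^ 2).im)
    (ha : ∀ (t : ℝ) (n : ℤ), a + w * t ≠ n) (x : ℂ) :
    Integrable fun t : ℝ ↦ mordellIntegrand x τ (a + w * t) := by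
  have hline (t : ℝ) : 2 * π * I * (a + w * t) = 2 * π * I * a + 2 * π * I * w * t := by ring
  have hpole (t : ℝ) : cexp (2 * π * I * a + 2 * π * I * w * t) ≠ 1 := by
    rw [← hline]
    exact cexp_two_pi_I_mul_ne_one (ha t)
  obtain ⟨M, hM⟩ := isBounded_iff_forall_norm_le.1 (isBounded_range_inv_cexp_sub_one hpole)
  have hgauss : (π * I * τ * w ^ 2).re < 0 := by
    have hre : (π * I * τ * w ^ 2).re = -(π * (τ * w ^ 2).im) := by
      rw [show π * I * τ * w ^ 2 = π * (I * (τ * w ^ 2)) by ring, re_ofReal_mul, I_mul_re, mul_neg]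
    rw [hre]
    exact neg_neg_of_pos (mul_pos Real.pi_pos hτ)
  have hint := (integrable_cexp_quadratic' hgauss (2 * π * I * τ * a * w + 2 * π * I * x * w)
    (π * I * τ * a ^ 2 + 2 * π * I * x * a)).mul_bdd
    (g := fun t : ℝ ↦ (cexp (2 * π * I * a + 2 * π * I * w * t) - 1)⁻¹)
    (Continuous.inv₀ (by fun_prop) fun t ↦ sub_ne_zero.2 (hpole t)).aestronglyMeasurable
    (.of_forall fun t ↦ hM _ ⟨t, rfl⟩)
  refine hint.congr (.of_forall fun t ↦ ?_)
  simp only [mordellIntegrand, div_eq_mul_inv, hline]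
  ring_nf

lemma ofReal_add_cexp_mul_ne_intCast {c θ : ℝ} (hc : ∀ n : ℤ, c ≠ n) (hθ : Real.sin θ ≠ 0)
    (t : ℝ) (n : ℤ) : c + cexp (θ * I) * t ≠ n := by
  intro h
  obtain rfl : t = 0 := by simpa [exp_ofReal_mul_I_im, hθ] using congrArg im h
  exact hc n (by simpa using congrArg re h)

lemma cexp_pi_div_four_mul_I_sq : cexp ((π / 4 : ℝ) * I) ^ 2 = I := by
  rw [← Complex.exp_nat_mul]
  convert exp_pi_div_two_mul_I using 2
  push_cast
  ring

theorem mordellPhi_entire_general (τ a w : ℂ) (hτ : 0 < (τ * w ^ 2).im)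
    (ha : ∀ (t : ℝ) (n : ℤ), a + w * t ≠ n) :
    Differentiable ℂ (fun x : ℂ ↦ ∫ t : ℝ, mordellIntegrand x τ (a + w * t) * w) ∧
    ∀ x : ℂ, Integrable fun t : ℝ ↦ mordellIntegrand x τ (a + w * t) * w := by
  have hint (x : ℂ) : Integrable fun t : ℝ ↦ mordellIntegrand x τ (a + w * t) * w :=
    (integrable_mordellIntegrand_add_mul hτ ha x).mul_const w
  have hfactor (x : ℂ) (t : ℝ) : mordellIntegrand x τ (a + w * t) * w =
      cexp (x * (2 * π * I * (a + w * t))) • (mordellIntegrand 0 τ (a + w * t) * w) := by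
    rw [mordellIntegrand_eq_cexp_mul, smul_eq_mul, mul_assoc]
  refine ⟨?_, hint⟩
  have hdiff := differentiable_integral_cexp_mul_smul
    (φ := fun t : ℝ ↦ 2 * π * I * (a + w * t))
    (f := fun t : ℝ ↦ mordellIntegrand 0 τ (a + w * t) * w)
    (Continuous.aestronglyMeasurable (by fun_prop))
    fun x ↦ (hint x).congr (.of_forall (hfactor x))
  simpa only [← hfactor] using hdiff

end MordellIntegral

/-- For `Re τ > 0`, the Mordell integral `Φ(x, τ)` is an entire function of `x`;
in particular the defining integral converges for every `x ∈ ℂ`. -/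
theorem mordellPhi_entire (τ : ℂ) (hτ : 0 < τ.re) (c : ℝ) (hc : 0 < c) (hc' : c < 1) :
    Differentiable ℂ (fun x : ℂ => mordellPhi x τ c) ∧
    ∀ x : ℂ, MeasureTheory.Integrable (fun t : ℝ =>
      (Complex.exp ((π : ℂ) * Complex.I * τ *
          ((c : ℂ) + Complex.exp ((π : ℂ) * Complex.I / 4) * (t : ℂ)) ^ 2 +
          2 * (π : ℂ) * Complex.I * x *
            ((c : ℂ) + Complex.exp ((π : ℂ) * Complex.I / 4) * (t : ℂ))) /
        (Complex.exp (2 * (π : ℂ) * Complex.I *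
          ((c : ℂ) + Complex.exp ((π : ℂ) * Complex.I / 4) * (t : ℂ))) - 1)) *
        Complex.exp ((π : ℂ) * Complex.I / 4)) := by
  have hdir : cexp (π * I / 4) = cexp ((π / 4 : ℝ) * I) := by push_cast; ring_nf
  have hc_int (n : ℤ) : c ≠ n := by rintro rfl; norm_cast at hc hc'; lia
  simp only [hdir]
  exact mordellPhi_entire_general τ c _ (by rwa [cexp_pi_div_four_mul_I_sq, mul_I_im])
    (ofReal_add_cexp_mul_ne_intCast hc_int (by simp))
end
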